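/- Consider a solvable system of bipolar max-product fuzzy relation equations max_{j=1..m} max(a_{ij}^+ · x_j, a_{ij}^- · n_P(x_j)) = b_i, i ∈ {1,...,n}, and let S^+ = {J^+ ⊆ {1,...,m} : (J^+, J^-) is a feasible pair for some J^- ⊆ {1,...,m}}. If S^+ has a greatest element Ĵ^+ with respect to set inclusion, then the tuple (x̂_1,...,x̂_m) defined by x̂_j = 0 if j ∉ Ĵ^+ and x̂_j = min{b_h ←_P a_{hj}^+ : h ∈ {1,...,n}} if j ∈ Ĵ^+ is the greatest solution of the system: it is a solution and every solution is componentwise ≤ it. -/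

import Mathlib

open Finset
open scoped Classical

/-- Product negation: `nP 0 = 1`, `nP x = 0` for `x ≠ 0`. -/
noncomputable def nP (x : ℝ) : ℝ := if x = 0 then 1 else 0

/-- Residuated implication of the product: `resP z x = min 1 (z / x)` for `x > 0`,
and `resP z 0 = 1`. -/
noncomputable def resP (z x : ℝ) : ℝ := if x = 0 then 1 else min 1 (z / x)

/-- Left-hand side of a bipolar max-product fuzzy relation equation:
`max_{j=1..m} max (a_j^+ * x_j) (a_j^- * nP (x_j))`. -/
noncomputable def eqLHS {m : ℕ} (hm : 0 < m) (ap an : Fin m → ℝ) (x : Fin m → ℝ) : ℝ :=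
  Finset.univ.sup' ⟨⟨0, hm⟩, Finset.mem_univ _⟩
    (fun j => max (ap j * x j) (an j * nP (x j)))

/-- `x` is a solution of the system of bipolar max-product FREs with coefficient
matrices `ap`, `an` and independent terms `b`. -/
def SysSol {m n : ℕ} (hm : 0 < m) (ap an : Fin n → Fin m → ℝ) (b : Fin n → ℝ)
    (x : Fin m → ℝ) : Prop :=
  (∀ j, x j ∈ Set.Icc (0:ℝ) 1) ∧ ∀ i, eqLHS hm (ap i) (an i) x = b i

/-- `(Jp, Jm)` is a feasible pair of index sets with respect to the system. -/
def FeasiblePair {m n : ℕ} (ap an : Fin n → Fin m → ℝ) (b : Fin n → ℝ)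
    (Jp Jm : Finset (Fin m)) : Prop :=
  Jp ∪ Jm = Finset.univ ∧ Jp ∩ Jm = ∅ ∧
    ∀ i,
      (b i = 0 → (∀ j ∈ Jp, ap i j = 0) ∧ ∀ j ∈ Jm, an i j = 0) ∧
      (0 < b i →
        (∃ j ∈ Jp, b i ≤ ap i j ∧ ∀ h, resP (b i) (ap i j) ≤ resP (b h) (ap h j)) ∨
        (∃ j ∈ Jm, an i j = b i ∧ ∀ h, an h j ≤ b h))

/-!
The support of a solution is the positive part of a feasible pair, so every solution vanishes
outside the greatest such part `Ĵ⁺`; by residuation it lies below `x̂` on `Ĵ⁺`. Feasibility alone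
does not make `x̂` a solution, because `a_{ij}^-` could exceed `b_i` at some `j ∉ Ĵ⁺`. But any given
solution is zero at such `j`, which forces `a_{ij}^- ≤ b_i`.
-/

lemma nP_zero : nP 0 = 1 := if_pos rfl

lemma nP_of_ne_zero {x : ℝ} (hx : x ≠ 0) : nP x = 0 := if_neg hx

section Residuum

variable {a x z : ℝ}

lemma resP_le_one (z a : ℝ) : resP z a ≤ 1 := by
  unfold resP
  split_ifs
  · exact le_rfl
  · exact min_le_left _ _

lemma le_resP_iff (hz : 0 ≤ z) (ha : 0 ≤ a) (hx : x ≤ 1) : x ≤ resP z a ↔ a * x ≤ z := by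
  rcases ha.eq_or_lt with rfl | ha
  · simp [resP, hx, hz]
  · rw [resP, if_neg ha.ne', le_min_iff, and_iff_right hx, le_div_iff₀' ha]

lemma resP_pos (hz : 0 ≤ z) (ha : 0 ≤ a) (h : z = 0 → a = 0) : 0 < resP z a := by
  rcases ha.eq_or_lt with rfl | ha
  · simp [resP]
  · have hz : 0 < z := hz.lt_of_ne' fun hz0 ↦ ha.ne' (h hz0)
    rw [resP, if_neg ha.ne']
    exact lt_min one_pos (div_pos hz ha)

lemma resP_mul_self_left (ha : a ≠ 0) (hx : x ≤ 1) : resP (a * x) a = x := by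
  rw [resP, if_neg ha, mul_div_cancel_left₀ x ha, min_eq_right hx]

lemma mul_resP_of_le (hz : 0 < z) (hza : z ≤ a) : a * resP z a = z := by
  have ha : 0 < a := hz.trans_le hza
  rw [resP, if_neg ha.ne', min_eq_right ((div_le_one ha).2 hza), mul_div_cancel₀ z ha.ne']

end Residuum

section ResidualBound

variable {ι : Type*} [Fintype ι] [Nonempty ι] {a b : ι → ℝ} {x : ℝ}

/-- The number `min_h (b_h ←_P a_h)`: the largest `x ∈ [0, 1]` with `a_h * x ≤ b_h` for all `h`,
when `a` and `b` are nonnegative. -/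
noncomputable def residualBound (a b : ι → ℝ) : ℝ :=
  univ.inf' univ_nonempty fun h ↦ resP (b h) (a h)

lemma residualBound_le_one (a b : ι → ℝ) : residualBound a b ≤ 1 :=
  (inf'_le _ (mem_univ (Classical.arbitrary ι))).trans (resP_le_one _ _)

lemma le_residualBound_iff (ha : ∀ h, 0 ≤ a h) (hb : ∀ h, 0 ≤ b h) (hx : x ≤ 1) :
    x ≤ residualBound a b ↔ ∀ h, a h * x ≤ b h := by
  simp only [residualBound, le_inf'_iff, mem_univ, true_imp_iff, le_resP_iff (hb _) (ha _) hx]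

lemma mul_residualBound_le (ha : ∀ h, 0 ≤ a h) (hb : ∀ h, 0 ≤ b h) (i : ι) :
    a i * residualBound a b ≤ b i :=
  (le_residualBound_iff ha hb (residualBound_le_one a b)).1 le_rfl i

lemma residualBound_pos (ha : ∀ h, 0 ≤ a h) (hb : ∀ h, 0 ≤ b h) (hzero : ∀ h, b h = 0 → a h = 0) :
    0 < residualBound a b :=
  (lt_inf'_iff _).2 fun h _ ↦ resP_pos (hb h) (ha h) (hzero h)

lemma residualBound_eq_resP_of_forall_le {i : ι} (hi : ∀ h, resP (b i) (a i) ≤ resP (b h) (a h)) :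
    residualBound a b = resP (b i) (a i) :=
  le_antisymm (inf'_le _ (mem_univ i)) (le_inf' _ _ fun h _ ↦ hi h)

end ResidualBound

section Equation

variable {m : ℕ} {hm : 0 < m} {ap an x : Fin m → ℝ} {c : ℝ}

lemma eqLHS_nonneg (hap : ∀ j, 0 ≤ ap j) (hx : ∀ j, 0 ≤ x j) : 0 ≤ eqLHS hm ap an x :=
  (le_sup'_iff _).2 ⟨⟨0, hm⟩, mem_univ _, le_max_of_le_left (mul_nonneg (hap _) (hx _))⟩

lemma eqLHS_le_iff (hc : 0 ≤ c) :
    eqLHS hm ap an x ≤ c ↔ ∀ j, ap j * x j ≤ c ∧ (x j = 0 → an j ≤ c) := by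
  have hneg (j : Fin m) : an j * nP (x j) ≤ c ↔ (x j = 0 → an j ≤ c) := by
    by_cases hx : x j = 0
    · simp [hx, nP_zero]
    · simp [hx, nP_of_ne_zero, hc]
  refine (sup'_le_iff _ _).trans ?_
  simp only [mem_univ, true_imp_iff, max_le_iff, hneg]

lemma le_eqLHS_iff (hc : 0 < c) :
    c ≤ eqLHS hm ap an x ↔ ∃ j, c ≤ ap j * x j ∨ x j = 0 ∧ c ≤ an j := by
  have hneg (j : Fin m) : c ≤ an j * nP (x j) ↔ x j = 0 ∧ c ≤ an j := by
    by_cases hx : x j = 0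
    · simp [hx, nP_zero]
    · simp [hx, nP_of_ne_zero, hc]
  refine (le_sup'_iff _).trans ?_
  simp only [mem_univ, true_and, le_max_iff, hneg]

end Equation

section System

variable {m n : ℕ} {hm : 0 < m} {ap an : Fin n → Fin m → ℝ} {b : Fin n → ℝ} {x : Fin m → ℝ}
  {J Jm : Finset (Fin m)} {i : Fin n} {j : Fin m}

namespace SysSol

lemma rhs_nonneg (hx : SysSol hm ap an b x) (hap : ∀ i j, 0 ≤ ap i j) (i : Fin n) : 0 ≤ b i :=
  hx.2 i ▸ eqLHS_nonneg (hap i) fun j ↦ (hx.1 j).1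

lemma mul_le (hx : SysSol hm ap an b x) (hap : ∀ i j, 0 ≤ ap i j) (i : Fin n) (j : Fin m) :
    ap i j * x j ≤ b i :=
  ((eqLHS_le_iff (hx.rhs_nonneg hap i)).1 (hx.2 i).le j).1

lemma neg_coeff_le_of_eq_zero (hx : SysSol hm ap an b x) (hap : ∀ i j, 0 ≤ ap i j) (hxj : x j = 0)
    (i : Fin n) : an i j ≤ b i :=
  ((eqLHS_le_iff (hx.rhs_nonneg hap i)).1 (hx.2 i).le j).2 hxj

lemma exists_mul_eq_or_neg_coeff_eq (hx : SysSol hm ap an b x) (hap : ∀ i j, 0 ≤ ap i j)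
    (hbi : 0 < b i) : ∃ j, ap i j * x j = b i ∨ x j = 0 ∧ an i j = b i := by
  obtain ⟨j, hj | ⟨hxj, hj⟩⟩ := (le_eqLHS_iff hbi).1 (hx.2 i).ge
  · exact ⟨j, .inl ((hx.mul_le hap i j).antisymm hj)⟩
  · exact ⟨j, .inr ⟨hxj, (hx.neg_coeff_le_of_eq_zero hap hxj i).antisymm hj⟩⟩

lemma resP_le_of_mul_eq (hx : SysSol hm ap an b x) (hap : ∀ i j, 0 ≤ ap i j) (hij : ap i j ≠ 0)
    (heq : ap i j * x j = b i) (h : Fin n) : resP (b i) (ap i j) ≤ resP (b h) (ap h j) := by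
  rw [← heq, resP_mul_self_left hij (hx.1 j).2,
    le_resP_iff (hx.rhs_nonneg hap h) (hap h j) (hx.1 j).2]
  exact hx.mul_le hap h j

lemma feasiblePair (hx : SysSol hm ap an b x) (hap : ∀ i j, 0 ≤ ap i j)
    (han : ∀ i j, 0 ≤ an i j) :
    FeasiblePair ap an b {j | x j ≠ 0} {j | x j = 0} := by
  refine ⟨by grind, by grind, fun i ↦ ⟨fun hbi ↦ ⟨fun j hj ↦ ?_, fun j hj ↦ ?_⟩, fun hbi ↦ ?_⟩⟩
  · have hmul : ap i j * x j = 0 :=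
      le_antisymm (hbi ▸ hx.mul_le hap i j) (mul_nonneg (hap i j) (hx.1 j).1)
    exact (mul_eq_zero.1 hmul).resolve_right ((mem_filter_univ j).1 hj)
  · exact le_antisymm (hbi ▸ hx.neg_coeff_le_of_eq_zero hap ((mem_filter_univ j).1 hj) i) (han i j)
  · obtain ⟨j, heq | ⟨hxj, heq⟩⟩ := hx.exists_mul_eq_or_neg_coeff_eq hap hbi
    · have hne : ap i j * x j ≠ 0 := heq ▸ hbi.ne'
      have hle : b i ≤ ap i j := heq ▸ mul_le_of_le_one_right (hap i j) (hx.1 j).2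
      exact .inl ⟨j, (mem_filter_univ j).2 (right_ne_zero_of_mul hne), hle,
        hx.resP_le_of_mul_eq hap (left_ne_zero_of_mul hne) heq⟩
    · exact .inr ⟨j, (mem_filter_univ j).2 hxj, heq, hx.neg_coeff_le_of_eq_zero hap hxj⟩

end SysSol

lemma FeasiblePair.eq_compl (hJ : FeasiblePair ap an b J Jm) : Jm = Jᶜ :=
  (IsCompl.of_eq hJ.2.1 hJ.1).compl_eq.symm

variable [NeZero n]

/-- The tuple `x̂` attached to an index set `J`: each `x̂_j` with `j ∈ J` is as large as the
inequalities `a_{hj}^+ * x_j ≤ b_h` allow, and the other entries vanish. -/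
noncomputable def residualTuple (ap : Fin n → Fin m → ℝ) (b : Fin n → ℝ) (J : Finset (Fin m)) :
    Fin m → ℝ :=
  fun j ↦ if j ∈ J then residualBound (fun h ↦ ap h j) b else 0

lemma residualTuple_of_mem (hj : j ∈ J) :
    residualTuple ap b J j = residualBound (fun h ↦ ap h j) b := if_pos hj

lemma residualTuple_of_notMem (hj : j ∉ J) : residualTuple ap b J j = 0 := if_neg hj

lemma SysSol.le_residualTuple (hx : SysSol hm ap an b x) (hap : ∀ i j, 0 ≤ ap i j)
    (hxJ : ∀ j ∉ J, x j = 0) : x ≤ residualTuple ap b J := by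
  intro j
  by_cases hj : j ∈ J
  · rw [residualTuple_of_mem hj,
      le_residualBound_iff (hap · j) (hx.rhs_nonneg hap) (hx.1 j).2]
    exact (hx.mul_le hap · j)
  · rw [residualTuple_of_notMem hj, hxJ j hj]

namespace FeasiblePair

lemma residualTuple_pos (hJ : FeasiblePair ap an b J Jm) (hap : ∀ i j, 0 ≤ ap i j)
    (hb : ∀ i, 0 ≤ b i) (hj : j ∈ J) : 0 < residualTuple ap b J j := by
  rw [residualTuple_of_mem hj]
  exact residualBound_pos (hap · j) hb fun h hbh ↦ ((hJ.2.2 h).1 hbh).1 j hj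

lemma eqLHS_residualTuple_le (hJ : FeasiblePair ap an b J Jm) (hap : ∀ i j, 0 ≤ ap i j)
    (hb : ∀ i, 0 ≤ b i) (hle : ∀ j ∉ J, an i j ≤ b i) :
    eqLHS hm (ap i) (an i) (residualTuple ap b J) ≤ b i := by
  refine (eqLHS_le_iff (hb i)).2 fun j ↦ ?_
  by_cases hj : j ∈ J
  · refine ⟨?_, fun hzero ↦ absurd hzero (hJ.residualTuple_pos hap hb hj).ne'⟩
    rw [residualTuple_of_mem hj]
    exact mul_residualBound_le (hap · j) hb i
  · rw [residualTuple_of_notMem hj, mul_zero]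
    exact ⟨hb i, fun _ ↦ hle j hj⟩

lemma le_eqLHS_residualTuple (hJ : FeasiblePair ap an b J Jm) (hbi : 0 < b i) :
    b i ≤ eqLHS hm (ap i) (an i) (residualTuple ap b J) := by
  rw [le_eqLHS_iff hbi]
  rcases (hJ.2.2 i).2 hbi with ⟨j, hj, hle, hmin⟩ | ⟨j, hj, heq, -⟩
  · refine ⟨j, .inl ?_⟩
    rw [residualTuple_of_mem hj, residualBound_eq_resP_of_forall_le hmin, mul_resP_of_le hbi hle]
  · rw [hJ.eq_compl, mem_compl] at hj
    exact ⟨j, .inr ⟨residualTuple_of_notMem hj, heq.ge⟩⟩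

lemma sysSol_residualTuple (hJ : FeasiblePair ap an b J Jm) (hap : ∀ i j, 0 ≤ ap i j)
    (hb : ∀ i, 0 ≤ b i) (hle : ∀ j ∉ J, ∀ i, an i j ≤ b i) :
    SysSol hm ap an b (residualTuple ap b J) := by
  have hIcc (j : Fin m) : residualTuple ap b J j ∈ Set.Icc 0 1 := by
    by_cases hj : j ∈ J
    · refine ⟨(hJ.residualTuple_pos hap hb hj).le, ?_⟩
      rw [residualTuple_of_mem hj]
      exact residualBound_le_one _ _
    · simp [residualTuple_of_notMem hj]
  refine ⟨hIcc, fun i ↦ (hJ.eqLHS_residualTuple_le hap hb (hle · · i)).antisymm ?_⟩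
  rcases (hb i).eq_or_lt with hbi | hbi
  · exact hbi ▸ eqLHS_nonneg (hap i) fun j ↦ (hIcc j).1
  · exact hJ.le_eqLHS_residualTuple hbi

end FeasiblePair

theorem stmt13_general (hap : ∀ i j, 0 ≤ ap i j) (han : ∀ i j, 0 ≤ an i j)
    (hsolv : ∃ x, SysSol hm ap an b x)
    (hJ : IsGreatest {Jp | ∃ Jm, FeasiblePair ap an b Jp Jm} J) :
    IsGreatest {x | SysSol hm ap an b x} (residualTuple ap b J) := by
  obtain ⟨⟨Jm, hfeas⟩, hgreatest⟩ := hJ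
  have hvanish {x : Fin m → ℝ} (hx : SysSol hm ap an b x) (j : Fin m) (hj : j ∉ J) : x j = 0 := by
    by_contra hxj
    exact hj (hgreatest ⟨_, hx.feasiblePair hap han⟩ ((mem_filter_univ j).2 hxj))
  obtain ⟨y, hy⟩ := hsolv
  have hneg (j : Fin m) (hj : j ∉ J) : ∀ i, an i j ≤ b i :=
    hy.neg_coeff_le_of_eq_zero hap (hvanish hy j hj)
  exact ⟨hfeas.sysSol_residualTuple hap (hy.rhs_nonneg hap) hneg,
    fun x hx ↦ hx.le_residualTuple hap (hvanish hx)⟩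

end System

theorem stmt13 (m n : ℕ) (hm : 0 < m) (hn : 0 < n)
    (ap an : Fin n → Fin m → ℝ) (b : Fin n → ℝ)
    (hap : ∀ i j, ap i j ∈ Set.Icc (0:ℝ) 1) (han : ∀ i j, an i j ∈ Set.Icc (0:ℝ) 1)
    (hb : ∀ i, b i ∈ Set.Icc (0:ℝ) 1)
    (hsolv : ∃ x, SysSol hm ap an b x)
    (Jhat : Finset (Fin m)) (hJhat : ∃ Jm, FeasiblePair ap an b Jhat Jm)
    (hgr : ∀ Jp : Finset (Fin m), (∃ Jm, FeasiblePair ap an b Jp Jm) → Jp ⊆ Jhat) :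
    SysSol hm ap an b
      (fun j => if j ∈ Jhat then Finset.univ.inf' ⟨⟨0, hn⟩, Finset.mem_univ _⟩ (fun h => resP (b h) (ap h j)) else 0) ∧
      ∀ x, SysSol hm ap an b x →
        x ≤ fun j => if j ∈ Jhat then Finset.univ.inf' ⟨⟨0, hn⟩, Finset.mem_univ _⟩ (fun h => resP (b h) (ap h j)) else 0 := by
  have : NeZero n := ⟨hn.ne'⟩
  exact stmt13_general (hap · · |>.1) (han · · |>.1) hsolv ⟨hJhat, fun Jp ↦ hgr Jp⟩
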